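/- Let α₁, α₂, α₃ ∈ (0,π) and let c₁ = (cos α₁ + cos α₂·cos α₃)/(sin α₂·sin α₃). Then c₁ > −1 if and only if both triangle inequalities α₁ + α₂ < α₃ + π and α₁ + α₃ < α₂ + π hold (equivalently, if and only if either α₂ ≥ α₃ and α₁ + α₂ < α₃ + π, or α₃ ≥ α₂ and α₁ + α₃ < α₂ + π). -/

import Mathlib

open Real

/-!
Since `cos α₂ * cos α₃ + sin α₂ * sin α₃ = cos (α₂ - α₃)`, the condition `c₁ > -1` says that
`cos α₁ + cos (α₂ - α₃)` is positive. Cosine is strictly decreasing on `[0, π]`, so this means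
`|α₂ - α₃| < π - α₁`, which is the conjunction of the two triangle inequalities; when the sign of
`α₂ - α₃` is known, only one of them is binding.
-/

theorem abs_sub_lt_iff_le_and_or_le_and {G : Type*} [AddCommGroup G] [LinearOrder G]
    [IsOrderedAddMonoid G] {a b c : G} :
    |a - b| < c ↔ (b ≤ a ∧ a - b < c) ∨ (a ≤ b ∧ b - a < c) := by
  constructor
  · intro h
    obtain ⟨hab, hba⟩ := abs_sub_lt_iff.mp h
    exact (le_total b a).imp (⟨·, hab⟩) (⟨·, hba⟩)
  · rintro (⟨hle, h⟩ | ⟨hle, h⟩)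
    · rwa [abs_of_nonneg (sub_nonneg.mpr hle)]
    · rwa [abs_sub_comm, abs_of_nonneg (sub_nonneg.mpr hle)]

theorem cos_add_cos_pos_iff {x y : ℝ} (hx : |x| ≤ π) (hy : |y| ≤ π) :
    0 < cos x + cos y ↔ |x| + |y| < π := by
  have hx' : π - |x| ∈ Set.Icc 0 π := ⟨sub_nonneg.mpr hx, sub_le_self π (abs_nonneg x)⟩
  calc 0 < cos x + cos y ↔ cos (π - |x|) < cos |y| := by
        rw [cos_pi_sub, cos_abs, cos_abs, neg_lt_iff_pos_add']
    _ ↔ |y| < π - |x| := strictAntiOn_cos.lt_iff_gt hx' ⟨abs_nonneg y, hy⟩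
    _ ↔ |x| + |y| < π := lt_sub_iff_add_lt'

theorem neg_one_lt_add_cos_mul_cos_div_iff {x y t : ℝ} (h : 0 < sin x * sin y) :
    -1 < (t + cos x * cos y) / (sin x * sin y) ↔ 0 < t + cos (x - y) := by
  rw [lt_div_iff₀ h, neg_one_mul, neg_lt_iff_pos_add, cos_sub, add_assoc]

/-- For α₁, α₂, α₃ ∈ (0,π), setting
c₁ = (cos α₁ + cos α₂ cos α₃)/(sin α₂ sin α₃), we have c₁ > -1 if and only if both
triangle inequalities α₁ + α₂ < α₃ + π and α₁ + α₃ < α₂ + π hold (equivalently, iff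
either α₂ ≥ α₃ and α₁ + α₂ < α₃ + π, or α₃ ≥ α₂ and α₁ + α₃ < α₂ + π). -/
theorem sublemma2 (α₁ α₂ α₃ : ℝ)
    (h₁ : α₁ ∈ Set.Ioo 0 π) (h₂ : α₂ ∈ Set.Ioo 0 π) (h₃ : α₃ ∈ Set.Ioo 0 π)
    (c₁ : ℝ) (hc₁ : c₁ = (cos α₁ + cos α₂ * cos α₃) / (sin α₂ * sin α₃)) :
    (c₁ > -1 ↔ (α₁ + α₂ < α₃ + π ∧ α₁ + α₃ < α₂ + π)) ∧
    (c₁ > -1 ↔ ((α₂ ≥ α₃ ∧ α₁ + α₂ < α₃ + π) ∨ (α₃ ≥ α₂ ∧ α₁ + α₃ < α₂ + π))) := by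
  have hsin : 0 < sin α₂ * sin α₃ := mul_pos (sin_pos_of_mem_Ioo h₂) (sin_pos_of_mem_Ioo h₃)
  have hα₁ : |α₁| ≤ π := (abs_of_pos h₁.1).trans_le h₁.2.le
  have hsub : |α₂ - α₃| ≤ π :=
    (abs_sub_lt_of_nonneg_of_lt h₂.1.le h₂.2 h₃.1.le h₃.2).le
  have key : c₁ > -1 ↔ |α₂ - α₃| < π - α₁ := by
    rw [gt_iff_lt, hc₁, neg_one_lt_add_cos_mul_cos_div_iff hsin, cos_add_cos_pos_iff hα₁ hsub,
      abs_of_pos h₁.1, lt_sub_iff_add_lt']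
  have tri₃ : α₂ - α₃ < π - α₁ ↔ α₁ + α₂ < α₃ + π := by constructor <;> intro h <;> linarith
  have tri₂ : α₃ - α₂ < π - α₁ ↔ α₁ + α₃ < α₂ + π := by constructor <;> intro h <;> linarith
  constructor
  · rw [key, abs_sub_lt_iff, tri₃, tri₂]
  · rw [key, abs_sub_lt_iff_le_and_or_le_and, tri₃, tri₂]
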